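/- Let X be a nonempty closed subset of ℝⁿ, H a properly constrained hypothesis on X, and Φ : X → ℝᵐ a constraint for H, with dual e-class E_H^∨ = {1 − λ·Φ : λ ∈ Λ_Φ} where Λ_Φ = {λ ∈ ℝᵐ : sup_{x∈X} λ·Φ(x) ≤ 1}. Then every sequence (E_i)_{i≥1} of elements of E_H^∨ admits a subsequence converging pointwise on X to some element of E_H^∨. -/

import Mathlib

open MeasureTheory Set ENNReal

noncomputable section

/-- The (topological) support of a Borel measure: the set of points all of whose open
neighbourhoods have positive measure. -/
def msupport {α : Type*} [TopologicalSpace α] [MeasurableSpace α]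
    (P : Measure α) : Set α :=
  {x | ∀ U : Set α, IsOpen U → x ∈ U → 0 < P U}

variable {α : Type*} [TopologicalSpace α] [MeasurableSpace α] {X : Set α} {m : ℕ}

/-- A hypothesis on `X`: a nonempty set of Borel probability measures (on `X`,
identified with the Borel probability measures supported in `X`). -/
def IsHypothesis (H : Set (Measure X)) : Prop :=
  H.Nonempty ∧ ∀ P ∈ H, IsProbabilityMeasure P

/-- An e-variable with respect to `H`: a Borel measurable nonnegative function whose
expectation is at most one under every `P ∈ H`. -/
def IsEVar (H : Set (Measure X)) (E : X → ℝ) : Prop :=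
  Measurable E ∧ (∀ x, 0 ≤ E x) ∧ ∀ P ∈ H, ∫⁻ x, ENNReal.ofReal (E x) ∂P ≤ 1

/-- `f` majorises `g` if `f(x) ≥ g(x)` for every `x ∈ X`. -/
def Majorises (f g : X → ℝ) : Prop := ∀ x, g x ≤ f x

/-- A maximal e-variable: an e-variable with no strict majoriser among e-variables. -/
def IsMaximalEVar (H : Set (Measure X)) (E : X → ℝ) : Prop :=
  IsEVar H E ∧ ¬ ∃ E', IsEVar H E' ∧ Majorises E' E ∧ E' ≠ E

/-- A majorising e-class: an e-class such that every e-variable is majorised by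
one of its elements. -/
def IsMajorisingClass (H : Set (Measure X)) (C : Set (X → ℝ)) : Prop :=
  (∀ E ∈ C, IsEVar H E) ∧ ∀ E, IsEVar H E → ∃ E' ∈ C, Majorises E' E

/-- The optimal e-class: a majorising e-class contained in every majorising e-class. -/
def IsOptimalClass (H : Set (Measure X)) (C : Set (X → ℝ)) : Prop :=
  IsMajorisingClass H C ∧ ∀ C', IsMajorisingClass H C' → C ⊆ C'

/-- `P ∈ P_Φ`: the expectation of the ℓ¹-norm of `Φ` under `P` is finite. -/
def MemPPhi (P : Measure X) (Φ : X → Fin m → ℝ) : Prop :=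
  ∫⁻ x, ENNReal.ofReal (∑ i, |Φ x i|) ∂P < ⊤

/-- `Φ` is a constraint for `H`: `Φ` is continuous and `H` is exactly the set of Borel
probability measures `P ∈ P_Φ` with `⟨P, Φ⟩ = 0`. -/
def IsConstraint (H : Set (Measure X)) (Φ : X → Fin m → ℝ) : Prop :=
  Continuous Φ ∧
    H = {P : Measure X | IsProbabilityMeasure P ∧ MemPPhi P Φ ∧ ∫ x, Φ x ∂P = 0}

/-- A proper constraint: a constraint such that `0` lies in the relative interior
of the convex hull of the image of `Φ`. -/
def IsProperConstraint (H : Set (Measure X)) (Φ : X → Fin m → ℝ) : Prop :=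
  IsConstraint H Φ ∧
    (0 : Fin m → ℝ) ∈ intrinsicInterior ℝ (convexHull ℝ (Set.range Φ))

/-- A minimal constraint: a constraint such that `0` lies in the interior
of the convex hull of the image of `Φ`. -/
def IsMinimalConstraint (H : Set (Measure X)) (Φ : X → Fin m → ℝ) : Prop :=
  IsConstraint H Φ ∧
    (0 : Fin m → ℝ) ∈ interior (convexHull ℝ (Set.range Φ))

/-- A finitely constrained hypothesis: one admitting a constraint. -/
def FinitelyConstrained (H : Set (Measure X)) : Prop :=
  ∃ (m : ℕ) (Φ : X → Fin m → ℝ), IsConstraint H Φ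

/-- A properly constrained hypothesis: one admitting a proper constraint. -/
def ProperlyConstrained (H : Set (Measure X)) : Prop :=
  ∃ (m : ℕ) (Φ : X → Fin m → ℝ), IsProperConstraint H Φ

/-- `Λ_{Φ|S} = {λ ∈ ℝᵐ : sup_{x ∈ S} λ·Φ(x) ≤ 1}`. -/
def LambdaSet (Φ : X → Fin m → ℝ) (S : Set X) : Set (Fin m → ℝ) :=
  {l | ∀ x ∈ S, ∑ i, l i * Φ x i ≤ 1}

/-- The dual e-class `E_H^∨ = {1 - λ·Φ : λ ∈ Λ_Φ}`. -/
def dualClass (Φ : X → Fin m → ℝ) : Set (X → ℝ) :=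
  {E | ∃ l ∈ LambdaSet Φ Set.univ, E = fun x => 1 - ∑ i, l i * Φ x i}

/-- A matching set for `H`: a closed set that is exactly the support of some `P ∈ H`. -/
def IsMatchingSet (H : Set (Measure X)) (S : Set X) : Prop :=
  IsClosed S ∧ ∃ P ∈ H, msupport P = S

end

/-!
The dual e-class lies in the finite-dimensional space spanned by `1` and the coordinates of `Φ`, and
it is closed for pointwise convergence, so it suffices to bound it at each point `x`. If `Ψ` is a
proper constraint for `H`, then `-ε Ψ(x)` is in the convex hull of the image of `Ψ` for some
`ε > 0`; a measure under which `Ψ` has mean `-ε Ψ(x)`, mixed with the Dirac mass at `x` in the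
proportion `1 : ε`, is an element `P` of `H` that charges `x`. Every `E` in the dual e-class is
nonnegative with `⟨P, E⟩ = 1`, hence `E(x) ≤ 1 / P{x}`. The two constraints `Ψ` and `Φ` interact
only through `P ∈ H`.
-/

theorem exists_neg_smul_mem_of_zero_mem_intrinsicInterior {V : Type*} [AddCommGroup V] [Module ℝ V]
    [TopologicalSpace V] [ContinuousSMul ℝ V] {C : Set V}
    (h0 : (0 : V) ∈ intrinsicInterior ℝ C) {v : V} (hv : v ∈ C) :
    ∃ ε : ℝ, 0 < ε ∧ -ε • v ∈ C := by
  obtain ⟨z, hz, hz0⟩ := mem_intrinsicInterior.1 h0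
  have line_mem (t : ℝ) : t • v ∈ affineSpan ℝ C := by
    simpa [AffineMap.lineMap_apply, hz0] using
      AffineMap.lineMap_mem t z.2 (subset_affineSpan ℝ C hv)
  let line (t : ℝ) : affineSpan ℝ C := ⟨-t • v, line_mem (-t)⟩
  have line_continuous : Continuous line := by fun_prop
  have line_zero : line 0 = z := by ext; simp [line, hz0]
  have near_zero : ∀ᶠ t in nhds (0 : ℝ), line t ∈ ((↑) ⁻¹' C : Set (affineSpan ℝ C)) :=
    line_continuous.continuousAt.eventually_mem (line_zero ▸ mem_interior_iff_mem_nhds.1 hz)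
  obtain ⟨ε, hεC, hε⟩ :=
    ((near_zero.filter_mono nhdsWithin_le_nhds).and (self_mem_nhdsWithin (s := Ioi 0))).exists
  exact ⟨ε, hε, hεC⟩

theorem isSeqCompact_of_isCompact_of_subset_finiteDimensional {𝕜 V : Type*}
    [NontriviallyNormedField 𝕜] [CompleteSpace 𝕜] [AddCommGroup V] [Module 𝕜 V] [TopologicalSpace V]
    [IsTopologicalAddGroup V] [ContinuousSMul 𝕜 V] [T2Space V] {K : Set V} (hK : IsCompact K)
    (W : Submodule 𝕜 V) [FiniteDimensional 𝕜 W] (hKW : K ⊆ W) : IsSeqCompact K := by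
  have : FirstCountableTopology W :=
    (ContinuousLinearEquiv.ofFinrankEq (𝕜 := 𝕜) (E := W) (F := Fin (Module.finrank 𝕜 W) → 𝕜)
      (by simp)).toHomeomorph.isInducing.firstCountableTopology
  obtain ⟨K, rfl⟩ : ∃ K' : Set W, (↑) '' K' = K := subset_range_iff_exists_image_eq.1 (by simpa)
  rw [← Topology.IsInducing.subtypeVal.isSeqCompact_iff]
  exact (Topology.IsInducing.subtypeVal.isCompact_iff.2 hK).isSeqCompact

section HasMean

variable {Ω F : Type*} [MeasurableSpace Ω] [NormedAddCommGroup F] [NormedSpace ℝ F]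

/-- `P` is a probability measure under which `Φ` is integrable with mean `v`. A constraint `Φ` for
`H` says that `H` is the set of measures under which `Φ` has mean `0`. -/
structure HasMean (P : Measure Ω) (Φ : Ω → F) (v : F) : Prop where
  isProbabilityMeasure : IsProbabilityMeasure P
  integrable : Integrable Φ P
  integral_eq : ∫ ω, Φ ω ∂P = v

namespace HasMean

theorem dirac [CompleteSpace F] [MeasurableSingletonClass Ω] (Φ : Ω → F) (ω : Ω) :
    HasMean (Measure.dirac ω) Φ (Φ ω) :=
  ⟨inferInstance, integrable_dirac enorm_lt_top, integral_dirac Φ ω⟩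

theorem convexComb {P Q : Measure Ω} {Φ : Ω → F} {u v : F} (hP : HasMean P Φ u)
    (hQ : HasMean Q Φ v) {a b : ℝ} (ha : 0 ≤ a) (hb : 0 ≤ b) (hab : a + b = 1) :
    HasMean (ENNReal.ofReal a • P + ENNReal.ofReal b • Q) Φ (a • u + b • v) := by
  have := hP.isProbabilityMeasure
  have := hQ.isProbabilityMeasure
  have integrable_P := hP.integrable.smul_measure (c := ENNReal.ofReal a) ofReal_ne_top
  have integrable_Q := hQ.integrable.smul_measure (c := ENNReal.ofReal b) ofReal_ne_top
  refine ⟨⟨?_⟩, integrable_P.add_measure integrable_Q, ?_⟩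
  · simp [← ENNReal.ofReal_add ha hb, hab]
  · rw [integral_add_measure integrable_P integrable_Q, integral_smul_measure,
      integral_smul_measure, hP.integral_eq, hQ.integral_eq, toReal_ofReal ha, toReal_ofReal hb]

theorem const_sub_clm [CompleteSpace F] {G : Type*} [NormedAddCommGroup G] [NormedSpace ℝ G]
    [CompleteSpace G] {P : Measure Ω} {Φ : Ω → F} {v : F} (hP : HasMean P Φ v) (L : F →L[ℝ] G)
    (c : G) : HasMean P (fun ω ↦ c - L (Φ ω)) (c - L v) := by
  have := hP.isProbabilityMeasure
  have integrable_L : Integrable (fun ω ↦ L (Φ ω)) P := L.integrable_comp hP.integrable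
  refine ⟨this, (integrable_const c).sub integrable_L, ?_⟩
  rw [integral_sub (integrable_const c) integrable_L, L.integral_comp_comm hP.integrable,
    hP.integral_eq, integral_const, probReal_univ, one_smul]

end HasMean

variable [CompleteSpace F] [MeasurableSingletonClass Ω]

theorem exists_hasMean_of_mem_convexHull_range {Φ : Ω → F} {v : F}
    (hv : v ∈ convexHull ℝ (range Φ)) : ∃ P : Measure Ω, HasMean P Φ v := by
  have convex_means : Convex ℝ {u : F | ∃ P : Measure Ω, HasMean P Φ u} := by
    rintro u ⟨P, hP⟩ w ⟨Q, hQ⟩ a b ha hb hab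
    exact ⟨_, hP.convexComb hQ ha hb hab⟩
  refine convexHull_min ?_ convex_means hv
  rintro _ ⟨ω, rfl⟩
  exact ⟨_, HasMean.dirac Φ ω⟩

theorem exists_hasMean_zero_measure_singleton_ne_zero {Φ : Ω → F}
    (h0 : (0 : F) ∈ intrinsicInterior ℝ (convexHull ℝ (range Φ))) (ω : Ω) :
    ∃ P : Measure Ω, HasMean P Φ 0 ∧ P {ω} ≠ 0 := by
  obtain ⟨ε, hε, hεΦ⟩ := exists_neg_smul_mem_of_zero_mem_intrinsicInterior h0
    (subset_convexHull ℝ _ (mem_range_self ω))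
  obtain ⟨Q, hQ⟩ := exists_hasMean_of_mem_convexHull_range hεΦ
  have weight_pos : 0 < ε / (1 + ε) := by positivity
  have hP := (HasMean.dirac Φ ω).convexComb hQ weight_pos.le (b := 1 / (1 + ε)) (by positivity)
    (by field_simp; ring)
  have mean_zero : (ε / (1 + ε)) • Φ ω + (1 / (1 + ε)) • (-ε • Φ ω) = 0 := by module
  refine ⟨_, mean_zero ▸ hP, ?_⟩
  simp [weight_pos]

end HasMean

section DualClass

variable {α : Type*} {X : Set α} {m : ℕ} {Φ : X → Fin m → ℝ} {E : X → ℝ}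

theorem mem_dualClass_iff :
    E ∈ dualClass Φ ↔ 1 - E ∈ Submodule.span ℝ (range fun i x ↦ Φ x i) ∧ 0 ≤ E := by
  rw [Submodule.mem_span_range_iff_exists_fun]
  constructor
  · rintro ⟨l, hl, rfl⟩
    refine ⟨⟨l, ?_⟩, fun x ↦ sub_nonneg.2 (hl x trivial)⟩
    ext x
    simp
  · rintro ⟨⟨l, hl⟩, hE⟩
    have sum_eq (x : X) : ∑ i, l i * Φ x i = 1 - E x := by simpa using congrFun hl x
    refine ⟨l, fun x _ ↦ ?_, ?_⟩
    · rw [sum_eq]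
      exact sub_le_self 1 (hE x)
    · ext x
      rw [sum_eq]
      ring

theorem isClosed_dualClass (Φ : X → Fin m → ℝ) : IsClosed (dualClass Φ) := by
  let W := Submodule.span ℝ (range fun i (x : X) ↦ Φ x i)
  have : FiniteDimensional ℝ W := .span_of_finite ℝ (finite_range _)
  have dualClass_eq : dualClass Φ = (fun E ↦ 1 - E) ⁻¹' W ∩ Ici 0 :=
    ext fun _ ↦ mem_dualClass_iff
  rw [dualClass_eq]
  exact (W.closed_of_finiteDimensional.preimage (by fun_prop)).inter isClosed_Ici

theorem isSeqCompact_dualClass_of_bounded {b : X → ℝ} (hb : ∀ E ∈ dualClass Φ, E ≤ b) :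
    IsSeqCompact (dualClass Φ) := by
  have isCompact_box : IsCompact (Icc (0 : X → ℝ) b) := by
    rw [← pi_univ_Icc]
    exact isCompact_univ_pi fun _ ↦ isCompact_Icc
  have isCompact_dualClass : IsCompact (dualClass Φ) :=
    isCompact_box.of_isClosed_subset (isClosed_dualClass Φ)
      fun E hE ↦ ⟨(mem_dualClass_iff.1 hE).2, hb E hE⟩
  let W := Submodule.span ℝ (insert 1 (range fun i (x : X) ↦ Φ x i))
  have : FiniteDimensional ℝ W := .span_of_finite ℝ ((finite_range _).insert 1)
  refine isSeqCompact_of_isCompact_of_subset_finiteDimensional isCompact_dualClass W fun E hE ↦ ?_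
  have one_sub_mem : 1 - E ∈ W :=
    Submodule.span_mono (subset_insert _ _) (mem_dualClass_iff.1 hE).1
  simpa using W.sub_mem (Submodule.subset_span (mem_insert _ _)) one_sub_mem

end DualClass

section EVariables

variable {α : Type*} [MeasurableSpace α] {X : Set α} {m : ℕ} {Φ : X → Fin m → ℝ}

theorem HasMean.of_mem_dualClass {P : Measure X} (hP : HasMean P Φ 0) {E : X → ℝ}
    (hE : E ∈ dualClass Φ) : HasMean P E 1 := by
  obtain ⟨l, -, rfl⟩ := hE
  let L : (Fin m → ℝ) →L[ℝ] ℝ := ∑ i, l i • .proj i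
  simpa [L] using hP.const_sub_clm L 1

theorem IsEVar.le_toReal_inv_measure_singleton [MeasurableSingletonClass α]
    {H : Set (Measure X)} {E : X → ℝ} (hE : IsEVar H E) {P : Measure X} (hP : P ∈ H) {x : X}
    (hx : P {x} ≠ 0) : E x ≤ (P {x})⁻¹.toReal := by
  have mul_le_one : ENNReal.ofReal (E x) * P {x} ≤ 1 := by
    rw [← lintegral_singleton (fun y ↦ ENNReal.ofReal (E y))]
    exact (setLIntegral_le_lintegral _ _).trans (hE.2.2 P hP)
  exact (ofReal_le_iff_le_toReal (inv_ne_top.2 hx)).1 (ENNReal.le_inv_iff_mul_le.2 mul_le_one)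

variable [TopologicalSpace α] [OpensMeasurableSpace α]

theorem memPPhi_iff_integrable {P : Measure X} (hΦ : Continuous Φ) :
    MemPPhi P Φ ↔ Integrable Φ P := by
  have integrable_sum_iff : MemPPhi P Φ ↔ Integrable (fun x ↦ ∑ i, |Φ x i|) P := by
    rw [MemPPhi, lt_top_iff_ne_top]
    exact lintegral_ofReal_ne_top_iff_integrable (by fun_prop)
      (.of_forall fun x ↦ Finset.sum_nonneg fun i _ ↦ abs_nonneg (Φ x i))
  rw [integrable_sum_iff, integrable_pi_iff]
  refine ⟨fun h i ↦ h.mono' (by fun_prop) (.of_forall fun x ↦ ?_),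
    fun h ↦ integrable_finsetSum _ fun i _ ↦ (h i).abs⟩
  exact Finset.single_le_sum (fun j _ ↦ abs_nonneg (Φ x j)) (Finset.mem_univ i)

variable {H : Set (Measure X)}

theorem IsConstraint.mem_iff_hasMean (hΦ : IsConstraint H Φ) {P : Measure X} :
    P ∈ H ↔ HasMean P Φ 0 := by
  rw [hΦ.2, mem_ofPred_eq, memPPhi_iff_integrable hΦ.1]
  exact ⟨fun ⟨h₁, h₂, h₃⟩ ↦ ⟨h₁, h₂, h₃⟩, fun ⟨h₁, h₂, h₃⟩ ↦ ⟨h₁, h₂, h₃⟩⟩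

theorem IsConstraint.isEVar_of_mem_dualClass (hΦ : IsConstraint H Φ) {E : X → ℝ}
    (hE : E ∈ dualClass Φ) : IsEVar H E := by
  have E_nonneg := (mem_dualClass_iff.1 hE).2
  have measurable_E : Measurable E := by
    have continuous_Φ := hΦ.1
    obtain ⟨l, -, rfl⟩ := hE
    fun_prop
  refine ⟨measurable_E, E_nonneg, fun P hP ↦ ?_⟩
  obtain ⟨_, integrable_E, integral_E⟩ := (hΦ.mem_iff_hasMean.1 hP).of_mem_dualClass hE
  rw [← ofReal_integral_eq_lintegral_ofReal integrable_E (.of_forall E_nonneg), integral_E,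
    ofReal_one]

variable [MeasurableSingletonClass α]

theorem ProperlyConstrained.exists_measure_singleton_ne_zero (hH : ProperlyConstrained H) (x : X) :
    ∃ P ∈ H, P {x} ≠ 0 := by
  obtain ⟨k, Ψ, hΨ, h0⟩ := hH
  obtain ⟨P, hP, hPx⟩ := exists_hasMean_zero_measure_singleton_ne_zero h0 x
  exact ⟨P, hΨ.mem_iff_hasMean.2 hP, hPx⟩

theorem statement18_general (hH : ProperlyConstrained H) (hΦ : IsConstraint H Φ) :
    IsSeqCompact (dualClass Φ) := by
  choose P hP hPx using hH.exists_measure_singleton_ne_zero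
  exact isSeqCompact_dualClass_of_bounded fun E hE x ↦
    (hΦ.isEVar_of_mem_dualClass hE).le_toReal_inv_measure_singleton (hP x) (hPx x)

end EVariables

/-- every sequence in the dual e-class of a properly constrained hypothesis
has a subsequence converging pointwise on `X` to an element of the dual e-class. -/
theorem statement18 {n m : ℕ} {X : Set (EuclideanSpace ℝ (Fin n))}
    (hXc : IsClosed X) (hXne : X.Nonempty)
    (H : Set (Measure X)) (hHne : H.Nonempty) (hpc : ProperlyConstrained H)
    (Φ : X → Fin m → ℝ) (hΦ : IsConstraint H Φ)
    (E : ℕ → (X → ℝ)) (hE : ∀ i, E i ∈ dualClass Φ) :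
    ∃ φ : ℕ → ℕ, StrictMono φ ∧ ∃ Elim ∈ dualClass Φ,
      ∀ x : X, Filter.Tendsto (fun i => E (φ i) x) Filter.atTop (nhds (Elim x)) := by
  obtain ⟨Elim, hElim, φ, hφ, hlim⟩ := statement18_general hpc hΦ hE
  exact ⟨φ, hφ, Elim, hElim, tendsto_pi_nhds.1 hlim⟩
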